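/- For all reals k1, k2 with 1 ≤ k1 < k2 and every ε > 0, there exist a PB instance I with budget b, maximum project cost c_max(I) = b/k1 and minimum project cost c_min(I) = b/k2, together with a cost-neutral additive satisfaction function μ (which is not a DNS function), such that every feasible outcome of I satisfying EJR1_μ has utilitarian ratio at most ε with respect to μ. -/

import Mathlib

open Finset
open scoped Classical

noncomputable section

/-- A participatory budgeting (PB) instance. -/
structure PB (π ν : Type) where
  projs : Finset π
  voters : Finset ν
  approves : ν → Finset π
  cost : π → ℝ
  budget : ℝ
  projs_nonempty : projs.Nonempty
  budget_pos : 0 < budget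
  cost_pos : ∀ p ∈ projs, 0 < cost p
  cost_le_budget : ∀ p ∈ projs, cost p ≤ budget
  approves_subset : ∀ i ∈ voters, approves i ⊆ projs

/-- A satisfaction function assigns a positive value to each positive cost. -/
def IsSat (μ : ℝ → ℝ) : Prop := ∀ t : ℝ, 0 < t → 0 < μ t

/-- A DNS function: weakly increasing, with weakly decreasing satisfaction per unit cost. -/
def IsDNS (μ : ℝ → ℝ) : Prop :=
  IsSat μ ∧ (∀ s t : ℝ, 0 < s → s ≤ t → μ s ≤ μ t) ∧
    (∀ s t : ℝ, 0 < s → s ≤ t → μ t / t ≤ μ s / s)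

namespace PB

variable {π ν : Type}

/-- Supporters of a project. -/
def supp (I : PB π ν) (p : π) : Finset ν := I.voters.filter (fun i => p ∈ I.approves i)

/-- Total cost of a set of projects. -/
def costOf (I : PB π ν) (S : Finset π) : ℝ := ∑ p ∈ S, I.cost p

/-- A feasible outcome. -/
def feasibleSet (I : PB π ν) (S : Finset π) : Prop := S ⊆ I.projs ∧ I.costOf S ≤ I.budget

/-- Minimum project cost. -/
def cmin (I : PB π ν) : ℝ := I.projs.inf' I.projs_nonempty I.cost

/-- Maximum project cost. -/
def cmax (I : PB π ν) : ℝ := I.projs.sup' I.projs_nonempty I.cost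

/-- Utilitarian welfare of a set of projects. -/
def uw (I : PB π ν) (μ : ℝ → ℝ) (S : Finset π) : ℝ :=
  ∑ p ∈ S, ((I.supp p).card : ℝ) * μ (I.cost p)

/-- The value ("bang per buck") of a project. -/
def projVal (I : PB π ν) (μ : ℝ → ℝ) (p : π) : ℝ :=
  ((I.supp p).card : ℝ) * μ (I.cost p) / I.cost p

/-- Satisfaction of voter `i` from an outcome. -/
def satOf (I : PB π ν) (μ : ℝ → ℝ) (i : ν) (S : Finset π) : ℝ :=
  ∑ p ∈ S ∩ I.approves i, μ (I.cost p)

/-- Minimum satisfaction of a project in the instance. -/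
def muMin (I : PB π ν) (μ : ℝ → ℝ) : ℝ :=
  I.projs.inf' I.projs_nonempty (fun p => μ (I.cost p))

/-- Maximum satisfaction of a project in the instance. -/
def muMax (I : PB π ν) (μ : ℝ → ℝ) : ℝ :=
  I.projs.sup' I.projs_nonempty (fun p => μ (I.cost p))

/-- The maximal utilitarian welfare over feasible outcomes. -/
def maxUW (I : PB π ν) (μ : ℝ → ℝ) : ℝ :=
  (I.projs.powerset.filter (fun S => I.costOf S ≤ I.budget)).sup'
    ⟨∅, Finset.mem_filter.mpr ⟨Finset.empty_mem_powerset _,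
      by simpa [PB.costOf] using I.budget_pos.le⟩⟩
    (I.uw μ)

/-- A group `N'` is `T`-cohesive. -/
def cohesive (I : PB π ν) (N' : Finset ν) (T : Finset π) : Prop :=
  N' ⊆ I.voters ∧ T ⊆ I.projs ∧ (∀ i ∈ N', T ⊆ I.approves i) ∧
    I.costOf T ≤ ((N'.card : ℝ) / (I.voters.card : ℝ)) * I.budget

/-- Extended justified representation up to one project w.r.t. `μ`. -/
def EJR1 (I : PB π ν) (μ : ℝ → ℝ) (W : Finset π) : Prop :=
  ∀ N' T, I.cohesive N' T →
    T ⊆ W ∨ ∃ i ∈ N', ∃ p ∈ I.approves i, p ∉ W ∧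
      I.satOf μ i W + μ (I.cost p) > I.satOf μ i T

/-- Pick the element of maximal `f`-value, breaking ties by the linear order. -/
def pickMax [LinearOrder π] (f : π → ℝ) (S : Finset π) (h : S.Nonempty) : π :=
  (S.filter (fun p => ∀ q ∈ S, f q ≤ f p)).min' (by
    obtain ⟨p, hp, hm⟩ := S.exists_max_image f h
    exact ⟨p, Finset.mem_filter.mpr ⟨hp, hm⟩⟩)

/-- Pick the element of minimal `f`-value, breaking ties by the linear order. -/
def pickMin [LinearOrder π] (f : π → ℝ) (S : Finset π) (h : S.Nonempty) : π :=
  (S.filter (fun p => ∀ q ∈ S, f p ≤ f q)).min' (by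
    obtain ⟨p, hp, hm⟩ := S.exists_min_image f h
    exact ⟨p, Finset.mem_filter.mpr ⟨hp, hm⟩⟩)

section Greedy

variable [LinearOrder π]

/-- One choice of the greedy rule: among the unchosen affordable projects, the one of
maximum value (ties broken by the linear order); `none` if no project is affordable. -/
def greedyStep (I : PB π ν) (μ : ℝ → ℝ) (rem : Finset π) (budg : ℝ) : Option π :=
  if h : (rem.filter (fun p => I.cost p ≤ budg)).Nonempty then
    some (pickMax (I.projVal μ) (rem.filter (fun p => I.cost p ≤ budg)) h)
  else none

/-- The (ordered) list of projects chosen by the greedy rule, with fuel. -/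
def greedyAux (I : PB π ν) (μ : ℝ → ℝ) : ℕ → Finset π → ℝ → List π
  | 0, _, _ => []
  | (k+1), rem, budg =>
    match I.greedyStep μ rem budg with
    | none => []
    | some p => p :: greedyAux I μ k (rem.erase p) (budg - I.cost p)

/-- The projects chosen by `Greedy_μ`, in order of selection. -/
def greedySeq (I : PB π ν) (μ : ℝ → ℝ) : List π :=
  greedyAux I μ I.projs.card I.projs I.budget

/-- The outcome of the greedy rule started from a set `rem` of unchosen projects
with remaining budget `budg`. -/
def greedyFrom (I : PB π ν) (μ : ℝ → ℝ) (rem : Finset π) (budg : ℝ) : Finset π :=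
  (greedyAux I μ rem.card rem budg).toFinset

/-- The outcome of `Greedy_μ`. -/
def greedy (I : PB π ν) (μ : ℝ → ℝ) : Finset π := (I.greedySeq μ).toFinset

/-- The state (unchosen projects, remaining budget) of `Greedy_μ` after `k` stages. -/
def greedyStateAux (I : PB π ν) (μ : ℝ → ℝ) : ℕ → Finset π × ℝ
  | 0 => (I.projs, I.budget)
  | (k+1) =>
    match I.greedyStep μ (greedyStateAux I μ k).1 (greedyStateAux I μ k).2 with
    | none => greedyStateAux I μ k
    | some p => ((greedyStateAux I μ k).1.erase p, (greedyStateAux I μ k).2 - I.cost p)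

/-- The project chosen by `Greedy_μ` at stage `k+1` (i.e. after `k` stages), if any. -/
def greedyChoice (I : PB π ν) (μ : ℝ → ℝ) (k : ℕ) : Option π :=
  I.greedyStep μ (I.greedyStateAux μ k).1 (I.greedyStateAux μ k).2

end Greedy

section MES

variable [LinearOrder π]

/-- The set of values `ρ ≥ 0` at which project `p` can be bought given voter budgets `bud`. -/
def rhoSet (I : PB π ν) (μ : ℝ → ℝ) (bud : ν → ℝ) (p : π) : Set ℝ :=
  {ρ : ℝ | 0 ≤ ρ ∧ ∑ i ∈ I.supp p, min (bud i) (ρ * μ (I.cost p)) = I.cost p}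

/-- `ρ(p)`: the least `ρ ≥ 0` at which `p` can be bought (junk value if none exists). -/
def rho (I : PB π ν) (μ : ℝ → ℝ) (bud : ν → ℝ) (p : π) : ℝ := sInf (I.rhoSet μ bud p)

/-- One choice of MES: among the unchosen projects with `ρ(p) < ∞`, one minimizing `ρ(p)`
(ties broken by the linear order); `none` if no project can be bought. -/
def mesStep (I : PB π ν) (μ : ℝ → ℝ) (rem : Finset π) (bud : ν → ℝ) : Option π :=
  if h : (rem.filter (fun p => (I.rhoSet μ bud p).Nonempty)).Nonempty then
    some (pickMin (I.rho μ bud) (rem.filter (fun p => (I.rhoSet μ bud p).Nonempty)) h)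
  else none

/-- Voter budgets after the supporters of `p` pay for it. -/
def mesPay (I : PB π ν) (μ : ℝ → ℝ) (bud : ν → ℝ) (p : π) : ν → ℝ :=
  fun i => if i ∈ I.supp p then bud i - min (bud i) (I.rho μ bud p * μ (I.cost p)) else bud i

/-- The state (unchosen projects, voter budgets) of `MES_μ` after `k` stages. -/
def mesStateAux (I : PB π ν) (μ : ℝ → ℝ) : ℕ → Finset π × (ν → ℝ)
  | 0 => (I.projs, fun _ => I.budget / (I.voters.card : ℝ))
  | (k+1) =>
    match I.mesStep μ (mesStateAux I μ k).1 (mesStateAux I μ k).2 with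
    | none => mesStateAux I μ k
    | some p => ((mesStateAux I μ k).1.erase p, I.mesPay μ (mesStateAux I μ k).2 p)

/-- The project chosen by `MES_μ` at stage `k+1` (i.e. after `k` stages), if any. -/
def mesChoice (I : PB π ν) (μ : ℝ → ℝ) (k : ℕ) : Option π :=
  I.mesStep μ (I.mesStateAux μ k).1 (I.mesStateAux μ k).2

/-- The final state of `MES_μ`. -/
def mesFinal (I : PB π ν) (μ : ℝ → ℝ) : Finset π × (ν → ℝ) :=
  I.mesStateAux μ I.projs.card

/-- The outcome of `MES_μ`. -/
def mesOutcome (I : PB π ν) (μ : ℝ → ℝ) : Finset π := I.projs \ (I.mesFinal μ).1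

/-- The outcome of `MES_μ` completed by `Greedy_μ`: run MES, then greedy on the unchosen
projects with the remaining total budget. -/
def completedMES (I : PB π ν) (μ : ℝ → ℝ) : Finset π :=
  I.mesOutcome μ ∪
    I.greedyFrom μ (I.mesFinal μ).1 (I.budget - I.costOf (I.mesOutcome μ))

/-- Voter `i` is budget-limited for project `p` after `k` stages of `MES_μ`:
`p` is unchosen and approved by `i`, affordable from the total remaining budget,
but an equal split of its cost exceeds `i`'s personal budget. -/
def budgetLimitedAt (I : PB π ν) (μ : ℝ → ℝ) (k : ℕ) (i : ν) (p : π) : Prop :=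
  i ∈ I.voters ∧ p ∈ (I.mesStateAux μ k).1 ∧ p ∈ I.approves i ∧
    I.cost p ≤ ∑ j ∈ I.voters, (I.mesStateAux μ k).2 j ∧
    (I.mesStateAux μ k).2 i < I.cost p / ((I.supp p).card : ℝ)

end MES

/-- Total cost of a list of projects. -/
def listCost (I : PB π ν) (L : List π) : ℝ := (L.map I.cost).sum

/-- Total utilitarian welfare of a list of projects. -/
def listUW (I : PB π ν) (μ : ℝ → ℝ) (L : List π) : ℝ :=
  (L.map (fun p => ((I.supp p).card : ℝ) * μ (I.cost p))).sum

end PB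

theorem mem_supp_iff {π ν : Type} (I : PB π ν) (p : π) (i : ν) :
    i ∈ I.supp p ↔ i ∈ I.voters ∧ p ∈ I.approves i := by
  simp [PB.supp]

/-- The bad instance: project `0` is large and supported by voter `0` only; projects `1,…,t`
are small and supported by voters `1,…,n`. -/
def badInst (k1 k2 : ℝ) (hk1 : 1 ≤ k1) (hk12 : k1 < k2) (t n : ℕ) : PB ℕ ℕ where
  projs := range (t + 1)
  voters := range (n + 1)
  approves := fun i => if i = 0 then {0} else Finset.Icc 1 t
  cost := fun p => if p = 0 then 1 / k1 else 1 / k2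
  budget := 1
  projs_nonempty := ⟨0, by simp⟩
  budget_pos := one_pos
  cost_pos := by
    intro p _
    have h1 : 0 < k1 := by linarith
    have h2 : 0 < k2 := by linarith
    split_ifs <;> positivity
  cost_le_budget := by
    intro p _
    have h1 : 0 < k1 := by linarith
    have h2 : 0 < k2 := by linarith
    split_ifs
    · rw [div_le_one h1]; exact hk1
    · rw [div_le_one h2]; linarith
  approves_subset := by
    intro i _ p hp
    split_ifs at hp
    · simp at hp; simp [hp]
    · simp at hp; simp; omega

/-- For all `1 ≤ k1 < k2` and `ε > 0`, there is an instance with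
`c_max = b/k1`, `c_min = b/k2` and a (non-DNS) cost-neutral additive satisfaction function `μ`
such that every feasible EJR1 outcome has utilitarian ratio at most `ε`. -/
theorem non_dns_ratio_arbitrarily_bad (k1 k2 : ℝ) (hk1 : 1 ≤ k1) (hk12 : k1 < k2)
    (ε : ℝ) (hε : 0 < ε) :
    ∃ I : PB ℕ ℕ, ∃ μ : ℝ → ℝ, IsSat μ ∧ ¬ IsDNS μ ∧
      I.cmax = I.budget / k1 ∧ I.cmin = I.budget / k2 ∧
      ∀ W : Finset ℕ, I.feasibleSet W → I.EJR1 μ W →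
        I.uw μ W ≤ ε * I.maxUW μ := by
  have h1 : 0 < k1 := by linarith
  have h2 : 0 < k2 := by linarith
  have hinv : 1 / k2 < 1 / k1 := one_div_lt_one_div_of_lt h1 hk12
  have hi2 : 0 < 1 / k2 := by positivity
  -- the number of small projects
  obtain ⟨t, ht1, htk, hkt⟩ : ∃ t : ℕ, 1 ≤ t ∧ (t : ℝ) < k2 ∧ k2 ≤ t + 1 := by
    have hc : 1 < ⌈k2⌉₊ := by rw [Nat.lt_ceil]; push_cast; linarith
    refine ⟨⌈k2⌉₊ - 1, by omega, ?_, ?_⟩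
    · rw [← Nat.lt_ceil]; omega
    · have := Nat.le_ceil k2
      rw [Nat.cast_sub hc.le]; push_cast; linarith
  obtain ⟨n, hn⟩ := exists_nat_ge ((t : ℝ) / (k2 - t))
  have hn' : (t : ℝ) * (n + 1) ≤ n * k2 := by
    rw [div_le_iff₀ (by linarith)] at hn; nlinarith
  set M : ℝ := t * n / ε + 2 with hM
  have hM2 : 2 ≤ M := by
    have : 0 ≤ (t : ℝ) * n / ε := by positivity
    linarith
  set I := badInst k1 k2 hk1 hk12 t n with hI
  let μ : ℝ → ℝ := fun x => if x = 1 / k1 then M else 1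
  have hμ1 : μ (1 / k1) = M := by simp [μ]
  have hμ2 : μ (1 / k2) = 1 := by simp only [μ]; rw [if_neg hinv.ne]
  have hc0 : I.cost 0 = 1 / k1 := by simp [hI, badInst]
  have hcs : ∀ p, p ≠ 0 → I.cost p = 1 / k2 := by
    intro p hp; simp [hI, badInst, hp]
  have hA0 : I.approves 0 = {0} := by simp [hI, badInst]
  have hAs : ∀ i, i ≠ 0 → I.approves i = Finset.Icc 1 t := by
    intro i hi; simp [hI, badInst, hi]
  have hP : I.projs = range (t + 1) := rfl
  have hV : I.voters = range (n + 1) := rfl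
  have hb : I.budget = 1 := rfl
  have hTcost : I.costOf (Finset.Icc 1 t) = t / k2 := by
    unfold PB.costOf
    rw [Finset.sum_congr rfl (fun p hp => hcs p (by simp at hp; omega))]
    simp [div_eq_mul_inv]
  refine ⟨I, μ, ?_, ?_, ?_, ?_, ?_⟩
  · intro x _
    simp only [μ]; split_ifs <;> linarith
  · rintro ⟨_, hmono, _⟩
    have hk : 0 < 1 / k1 := by positivity
    have h := hmono (1 / k1) (2 / k1) hk (by gcongr; norm_num)
    have hne : (2 : ℝ) / k1 ≠ 1 / k1 := by
      intro h; field_simp at h; norm_num at h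
    rw [hμ1] at h
    simp only [μ] at h
    rw [if_neg hne] at h
    linarith
  · unfold PB.cmax
    rw [hb]
    apply le_antisymm
    · apply Finset.sup'_le
      intro p _
      by_cases hp : p = 0
      · rw [hp, hc0]
      · rw [hcs p hp]; exact hinv.le
    · rw [← hc0]
      exact Finset.le_sup' I.cost (by rw [hP]; simp)
  · unfold PB.cmin
    rw [hb]
    apply le_antisymm
    · rw [← hcs 1 one_ne_zero]
      exact Finset.inf'_le I.cost (by rw [hP]; simp; omega)
    · apply Finset.le_inf'
      intro p _
      by_cases hp : p = 0
      · rw [hp, hc0]; exact hinv.le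
      · rw [hcs p hp]
  · intro W hW hE
    have hsat : ∀ i, i ≠ 0 → ∀ S : Finset ℕ,
        I.satOf μ i S = ((S ∩ Finset.Icc 1 t).card : ℝ) := by
      intro i hi S
      unfold PB.satOf
      rw [hAs i hi, Finset.sum_congr rfl (g := fun _ => (1 : ℝ))]
      · simp; congr!
      · intro p hp
        simp at hp
        rw [hcs p (by omega), hμ2]
    -- all small projects are forced
    have hTW : Finset.Icc 1 t ⊆ W := by
      have hcoh : I.cohesive (Finset.Icc 1 n) (Finset.Icc 1 t) := by
        refine ⟨?_, ?_, ?_, ?_⟩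
        · intro i hi; rw [hV]; simp at hi ⊢; omega
        · intro i hi; rw [hP]; simp at hi ⊢; omega
        · intro i hi; rw [hAs i (by simp at hi; omega)]
        · rw [hTcost, hV, hb]
          simp only [Nat.card_Icc, Finset.card_range, mul_one, Nat.add_sub_cancel]
          push_cast
          rw [div_le_div_iff₀ h2 (by positivity)]
          exact hn'
      rcases hE _ _ hcoh with h | ⟨i, hi, p, hp, hpW, hgt⟩
      · exact h
      · exfalso
        have hi0 : i ≠ 0 := by simp at hi; omega
        rw [hAs i hi0] at hp
        have hp0 : p ≠ 0 := by simp at hp; omega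
        rw [hsat i hi0, hsat i hi0, hcs p hp0, hμ2, Finset.inter_self] at hgt
        have hlt : (W ∩ Finset.Icc 1 t).card < (Finset.Icc 1 t).card := by
          apply Finset.card_lt_card
          refine ⟨Finset.inter_subset_right, fun h => hpW ?_⟩
          exact (Finset.mem_inter.mp (h hp)).1
        have : ((W ∩ Finset.Icc 1 t).card : ℝ) + 1 ≤ ((Finset.Icc 1 t).card : ℝ) := by
          exact_mod_cast hlt
        linarith
    -- hence the large project does not fit
    have h0W : 0 ∉ W := by
      intro h0
      have hsub : insert 0 (Finset.Icc 1 t) ⊆ W := Finset.insert_subset h0 hTW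
      have hle : I.costOf (insert 0 (Finset.Icc 1 t)) ≤ I.costOf W := by
        unfold PB.costOf
        exact Finset.sum_le_sum_of_subset_of_nonneg hsub
          (fun p hp _ => (I.cost_pos p (hW.1 hp)).le)
      have heq : I.costOf (insert 0 (Finset.Icc 1 t)) = 1 / k1 + t / k2 := by
        rw [← hTcost, ← hc0]
        unfold PB.costOf
        rw [Finset.sum_insert (by simp)]
      have h3 := hW.2
      rw [hb] at h3
      have h4 : (1 : ℝ) ≤ 1 / k2 + t / k2 := by
        rw [← add_div, le_div_iff₀ h2]; linarith
      linarith
    have hWT : W = Finset.Icc 1 t := by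
      apply Finset.Subset.antisymm _ hTW
      intro p hp
      have hpP := hW.1 hp
      rw [hP] at hpP
      have : p ≠ 0 := fun h => h0W (h ▸ hp)
      simp at hpP ⊢; omega
    have huw : I.uw μ W ≤ t * n := by
      rw [hWT]
      unfold PB.uw
      have : ∀ p ∈ Finset.Icc 1 t,
          ((I.supp p).card : ℝ) * μ (I.cost p) ≤ n := by
        intro p hp
        have hp0 : p ≠ 0 := by simp at hp; omega
        rw [hcs p hp0, hμ2, mul_one]
        have hs : I.supp p ⊆ Finset.Icc 1 n := by
          intro i hi
          rw [mem_supp_iff, hV] at hi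
          have : i ≠ 0 := by
            rintro rfl
            rw [hA0] at hi
            simp at hi; omega
          simp at hi ⊢; omega
        have := Finset.card_le_card hs
        simp at this
        exact_mod_cast this
      have := Finset.sum_le_card_nsmul _ _ _ this
      simpa using this
    have hmax : M ≤ I.maxUW μ := by
      have h0 : I.uw μ {0} ≤ I.maxUW μ := by
        unfold PB.maxUW
        apply Finset.le_sup' (I.uw μ)
        rw [Finset.mem_filter, Finset.mem_powerset]
        refine ⟨by rw [hP]; simp, ?_⟩
        simpa [PB.costOf] using I.cost_le_budget 0 (by rw [hP]; simp)
      have h5 : 1 ≤ (I.supp 0).card := by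
        rw [Nat.one_le_iff_ne_zero, Finset.card_ne_zero]
        refine ⟨0, ?_⟩
        rw [mem_supp_iff, hA0, hV]
        simp
      have h6 : I.uw μ {0} = ((I.supp 0).card : ℝ) * M := by
        unfold PB.uw
        rw [Finset.sum_singleton, hc0, hμ1]
      have h7 : (1 : ℝ) ≤ ((I.supp 0).card : ℝ) := by exact_mod_cast h5
      nlinarith
    calc I.uw μ W ≤ t * n := huw
      _ = ε * (t * n / ε) := by field_simp
      _ ≤ ε * M := by
        apply mul_le_mul_of_nonneg_left _ hε.le
        linarith
      _ ≤ ε * I.maxUW μ := mul_le_mul_of_nonneg_left hmax hε.le
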